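/- Let H be a complex separable Hilbert space and let A be a compact bounded linear operator on H with ‖A‖ < 1. If B₁ and B₂ are both operator-norm limit points of the sequence (|A^n|^{1/n})_{n≥1}, then B₁ = B₂; that is, the sequence has at most one operator-norm limit point. -/

import Mathlib

/-!
Fix `r > 0`. Since `A` is compact, there is a maximal finite-dimensional `A`-invariant subspace `W`
on which all eigenvalues of `A` have modulus greater than `r` (`exists_isOuter`). On `W`, the
operator `A` has an inverse `G` whose spectral radius is less than `1 / r`, while by maximality and
the Fredholm alternative the compression `D = (1 - P) A`, with `P` the projection onto `W`, has
spectral radius at most `r`. The convergent series `L = -∑ G ^ (k + 1) A D ^ k` is valued in `W` and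
satisfies `A (1 + L) = (1 + L) D`. Hence `A ^ n` grows at most like `ρ ^ n`, for every `ρ > r`, on
the range of `1 + L`, and expands `W` at least like `σ ^ n` for some `σ > r` (`exists_splitting`).

Let `B` be a limit point of `T n = |A ^ n| ^ (1 / n)`, and note that `‖(T n) ^ n x‖ = ‖A ^ n x‖`.
For `r < a < σ`, the operator `(B - a)₊` is a limit of operators `(T n - a)₊`. It therefore kills
the range of `1 + L`, where `A ^ n` grows too slowly. It is also injective on `W`: for `a < b < σ`
and large `n`, the operator `(T n - b)₊` is injective on `W` and `(B - a)₊` is injective on the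
range of `(T n - b)₊`, so the range of `(B - a)₊`, which equals `(B - a)₊ W`, has dimension at least
that of `W`. Consequently the kernel of `(B - a)₊` is the kernel of `L`, which depends only on `A`
(`exists_cut`).

As `r` is arbitrary, two limit points `B₁` and `B₂` have cuts with the same kernel at levels `a`
that are dense in `(0, ∞)`, which makes every eigenvector of `B₁` an eigenvector of `B₂` for the same
eigenvalue (`eigenvector_transfer`). Moreover `(B - a)₊ = -(B - a)₊ L` is compact, so `B` is compact.
The spectral theorem for compact self-adjoint operators then gives `B₁ = B₂`.
-/

open scoped NNReal InnerProductSpace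
open Filter Topology

/-- The absolute value `|T| = (T*T)^{1/2}` of a bounded operator on a complex Hilbert space. -/
noncomputable def opAbs {H : Type*} [NormedAddCommGroup H] [InnerProductSpace ℂ H]
    [CompleteSpace H] (T : H →L[ℂ] H) : H →L[ℂ] H :=
  CFC.sqrt (ContinuousLinearMap.adjoint T * T)

/-- `|T ^ n| ^ (1 / n)`, via the continuous functional calculus. -/
noncomputable def absPow {H : Type*} [NormedAddCommGroup H] [InnerProductSpace ℂ H]
    [CompleteSpace H] (T : H →L[ℂ] H) (n : ℕ) : H →L[ℂ] H :=
  CFC.nnrpow (opAbs (T ^ n)) ((n : ℝ≥0))⁻¹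

/-! ### Positive and negative parts of self-adjoint operators -/

section CFC

variable {H : Type*} [NormedAddCommGroup H] [InnerProductSpace ℂ H] [CompleteSpace H]

omit [CompleteSpace H] in
lemma norm_pow_apply_le {M : H →L[ℂ] H} {b : ℝ} (hM : ‖M‖ ≤ b) (n : ℕ) (x : H) :
    ‖(M ^ n) x‖ ≤ b ^ n * ‖x‖ := by
  have hb : 0 ≤ b := (norm_nonneg _).trans hM
  induction n with
  | zero => simp
  | succ n ih =>
    rw [pow_succ', pow_succ', mul_apply_eq_comp, mul_assoc]
    exact (M.le_opNorm _).trans (by gcongr)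

lemma absPow_nonneg (A : H →L[ℂ] H) (n : ℕ) : 0 ≤ absPow A n := CFC.nnrpow_nonneg

lemma absPow_pow (A : H →L[ℂ] H) {n : ℕ} (hn : n ≠ 0) : absPow A n ^ n = opAbs (A ^ n) := by
  have h0 : 0 ≤ opAbs (A ^ n) := CFC.sqrt_nonneg _
  have hn' : (n : ℝ≥0) ≠ 0 := by exact_mod_cast hn
  have h := CFC.nnrpow_inv_nnrpow (opAbs (A ^ n)) hn' h0
  rw [CFC.nnrpow_eq_rpow (by positivity), NNReal.coe_natCast,
    CFC.rpow_natCast _ _ CFC.nnrpow_nonneg] at h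
  exact h

lemma norm_opAbs_apply (S : H →L[ℂ] H) (x : H) : ‖opAbs S x‖ = ‖S x‖ := by
  have h0 : 0 ≤ opAbs S := CFC.sqrt_nonneg _
  have hsa : IsSelfAdjoint (opAbs S) := .of_nonneg h0
  have hp : 0 ≤ ContinuousLinearMap.adjoint S * S := star_mul_self_nonneg S
  have h : opAbs S * opAbs S = ContinuousLinearMap.adjoint S * S :=
    CFC.sqrt_mul_sqrt_self _ hp
  have h1 : ∀ R : H →L[ℂ] H, ‖R x‖ ^ 2 =
      RCLike.re (inner ℂ ((ContinuousLinearMap.adjoint R * R) x) x) := fun R => by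
    rw [mul_apply_eq_comp, ContinuousLinearMap.adjoint_inner_left,
      inner_self_eq_norm_sq]
  have h2 : ‖opAbs S x‖ ^ 2 = ‖S x‖ ^ 2 := by
    rw [h1, h1 S, hsa.adjoint_eq, h]
  exact (sq_eq_sq₀ (norm_nonneg _) (norm_nonneg _)).1 h2

lemma norm_absPow_pow_apply (A : H →L[ℂ] H) {n : ℕ} (hn : n ≠ 0) (x : H) :
    ‖(absPow A n ^ n) x‖ = ‖(A ^ n) x‖ := by
  rw [absPow_pow A hn, norm_opAbs_apply]

/-- The positive part `(T - a)₊` of a self-adjoint operator `T` above the level `a`. -/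
noncomputable def cut (a : ℝ) (T : H →L[ℂ] H) : H →L[ℂ] H := cfc (fun t : ℝ => max (t - a) 0) T

/-- The negative part `(T - a)₋` of a self-adjoint operator `T` below the level `a`. -/
noncomputable def cutNeg (a : ℝ) (T : H →L[ℂ] H) : H →L[ℂ] H :=
  cfc (fun t : ℝ => max (a - t) 0) T

lemma cut_isSelfAdjoint (a : ℝ) (T : H →L[ℂ] H) : IsSelfAdjoint (cut a T) := cfc_predicate _ _

lemma cutNeg_isSelfAdjoint (a : ℝ) (T : H →L[ℂ] H) : IsSelfAdjoint (cutNeg a T) :=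
  cfc_predicate _ _

lemma cut_sub_cutNeg (a : ℝ) {T : H →L[ℂ] H} (hT : IsSelfAdjoint T) :
    cut a T - cutNeg a T = T - algebraMap ℝ _ a := by
  rw [cut, cutNeg, ← cfc_sub _ _ T (by fun_prop) (by fun_prop)]
  conv_rhs => rw [← cfc_id' ℝ T, ← cfc_const a T, ← cfc_sub _ _ T (by fun_prop) (by fun_prop)]
  refine cfc_congr fun t _ => ?_
  grind

lemma cut_mul_cutNeg (a : ℝ) (T : H →L[ℂ] H) : cut a T * cutNeg a T = 0 := by
  rw [cut, cutNeg, ← cfc_mul _ _ T (by fun_prop) (by fun_prop)]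
  rw [← cfc_const_zero ℝ T]
  refine cfc_congr fun t _ => ?_
  rcases le_total t a with h | h
  · simp [max_eq_right (sub_nonpos.2 h)]
  · simp [max_eq_right (sub_nonpos.2 h)]

/-- `T` is at least `a` on the range of `(T - a)₊`, so components there are amplified by `T ^ n`. -/
lemma norm_cut_apply_le {a : ℝ} (ha : 0 < a) {T : H →L[ℂ] H} (hT : IsSelfAdjoint T) (n : ℕ)
    (x : H) : ‖cut a T x‖ ≤ ‖cut a T‖ * ((a⁻¹) ^ n * ‖(T ^ n) x‖) := by
  have hc : Continuous fun t : ℝ => (max t a)⁻¹ :=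
    (continuous_id.max continuous_const).inv₀ fun t => (lt_max_of_lt_right ha).ne'
  set h := cfc (fun t : ℝ => (max t a)⁻¹) T with hh
  have hn : ‖h‖ ≤ a⁻¹ := by
    refine norm_cfc_le (by positivity) fun t _ => ?_
    have : 0 < max t a := lt_max_of_lt_right ha
    rw [Real.norm_of_nonneg (by positivity)]
    gcongr
    exact le_max_right _ _
  have key : cut a T = cut a T * (h ^ n * T ^ n) := by
    have hcn : Continuous fun t : ℝ => (max t a)⁻¹ ^ n := hc.pow n
    conv_rhs =>
      rw [cut, hh, ← cfc_pow _ n T hc.continuousOn, ← cfc_pow_id (R := ℝ) T n,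
        ← cfc_mul (fun t : ℝ => (max t a)⁻¹ ^ n) (fun t : ℝ => t ^ n) T hcn.continuousOn
          (by fun_prop),
        ← cfc_mul (fun t : ℝ => max (t - a) 0) (fun t : ℝ => (max t a)⁻¹ ^ n * t ^ n) T
          (by fun_prop) (hcn.mul (by fun_prop)).continuousOn]
    refine cfc_congr fun t _ => ?_
    rcases le_total t a with h | h
    · simp [max_eq_right (sub_nonpos.2 h)]
    · have : t ≠ 0 := (ha.trans_le h).ne'
      rw [max_eq_left h, inv_pow, inv_mul_cancel₀ (pow_ne_zero n this), mul_one]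
  calc ‖cut a T x‖ = ‖cut a T ((h ^ n) ((T ^ n) x))‖ := by
        conv_lhs => rw [key]
        rfl
    _ ≤ ‖cut a T‖ * ‖(h ^ n) ((T ^ n) x)‖ := ContinuousLinearMap.le_opNorm _ _
    _ ≤ _ := by
        gcongr
        exact norm_pow_apply_le hn n _

/-- `T` is at most `b` on the kernel of `(T - b)₊`. -/
lemma norm_pow_apply_le_of_cut {b : ℝ} (hb : 0 ≤ b) {T : H →L[ℂ] H} (hT : 0 ≤ T) (n : ℕ)
    (x : H) (hx : cut b T x = 0) : ‖(T ^ n) x‖ ≤ b ^ n * ‖x‖ := by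
  have hsa : IsSelfAdjoint T := .of_nonneg hT
  set M := cfc (fun t : ℝ => min t b) T with hM
  have hMn : ‖M‖ ≤ b := by
    refine norm_cfc_le hb fun t ht => ?_
    have : 0 ≤ t := spectrum_nonneg_of_nonneg hT ht
    rw [Real.norm_of_nonneg (le_min this hb)]
    exact min_le_right _ _
  have hsum : T = M + cut b T := by
    rw [hM, cut, ← cfc_add (R := ℝ) T _ _ (by fun_prop) (by fun_prop)]
    conv_lhs => rw [← cfc_id' ℝ T]
    refine cfc_congr fun t _ => ?_
    grind
  have hcomm : cut b T * M = M * cut b T := cfc_commute_cfc _ _ T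
  have key : ∀ n : ℕ, ∀ y, cut b T y = 0 → (T ^ n) y = (M ^ n) y := by
    intro n
    induction n with
    | zero => simp
    | succ n ih =>
      intro y hy
      have h1 : T y = M y := by
        conv_lhs => rw [hsum]
        simp [hy]
      rw [pow_succ, pow_succ, mul_apply_eq_comp, mul_apply_eq_comp, h1]
      refine ih _ ?_
      rw [← mul_apply_eq_comp, hcomm, mul_apply_eq_comp, hy, map_zero]
  rw [key n x hx]
  exact norm_pow_apply_le hMn n x

/-- For `a < b`, the operator `(T - a)₊` is bounded below by `b - a` on the range of `(T - b)₊`. -/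
lemma le_norm_cut_cut {a b : ℝ} (hab : a < b) {T : H →L[ℂ] H}
    (x : H) : (b - a) * ‖cut b T x‖ ≤ ‖cut a T (cut b T x)‖ := by
  have hba : 0 < b - a := sub_pos.2 hab
  have hc : Continuous fun t : ℝ => (max (t - a) (b - a))⁻¹ :=
    ((continuous_id.sub continuous_const).max continuous_const).inv₀
      fun t => (lt_max_of_lt_right hba).ne'
  set h := cfc (fun t : ℝ => (max (t - a) (b - a))⁻¹) T with hh
  have hn : ‖h‖ ≤ (b - a)⁻¹ := by
    refine norm_cfc_le (by positivity) fun t _ => ?_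
    have : 0 < max (t - a) (b - a) := lt_max_of_lt_right hba
    rw [Real.norm_of_nonneg (by positivity)]
    gcongr
    exact le_max_right _ _
  have key : cut b T = h * (cut a T * cut b T) := by
    conv_rhs =>
      rw [cut, cut, hh, ← cfc_mul _ _ T (by fun_prop) (by fun_prop),
        ← cfc_mul _ _ T hc.continuousOn (by fun_prop)]
    refine cfc_congr fun t _ => ?_
    rcases le_total t b with h | h
    · simp [max_eq_right (sub_nonpos.2 h)]
    · have h1 : t - a ≠ 0 := by linarith
      have h2 : b - a ≤ t - a := by linarith
      have h3 : 0 ≤ t - a := by linarith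
      simp only [max_eq_left h2, max_eq_left h3]
      field_simp
  have h1 : ‖cut b T x‖ ≤ (b - a)⁻¹ * ‖cut a T (cut b T x)‖ := by
    calc ‖cut b T x‖ = ‖h (cut a T (cut b T x))‖ := by
          conv_lhs => rw [key]
          rfl
      _ ≤ ‖h‖ * ‖cut a T (cut b T x)‖ := ContinuousLinearMap.le_opNorm _ _
      _ ≤ _ := by gcongr
  rwa [inv_mul_eq_div, le_div_iff₀ hba, mul_comm] at h1

lemma tendsto_cut (a : ℝ) {T : ℕ → H →L[ℂ] H} {B : H →L[ℂ] H} (hT : ∀ k, IsSelfAdjoint (T k))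
    (hB : IsSelfAdjoint B) (h : Tendsto T atTop (𝓝 B)) :
    Tendsto (fun k => cut a (T k)) atTop (𝓝 (cut a B)) := by
  have := ContinuousOn.cfc_of_mem_nhdsSet (𝕜 := ℝ) (A := H →L[ℂ] H) (s := Set.univ)
    (t := {S : H →L[ℂ] H | IsSelfAdjoint S}) (a := fun S => S)
    (fun t : ℝ => max (t - a) 0) (by simp) continuousOn_id (fun x hx => hx) (by fun_prop)
  exact (this B hB).tendsto.comp (tendsto_nhdsWithin_iff.2 ⟨h, Eventually.of_forall hT⟩)

lemma norm_cut_sub_cut_le (a b : ℝ) (T : H →L[ℂ] H) : ‖cut a T - cut b T‖ ≤ |a - b| := by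
  rw [cut, cut, ← cfc_sub _ _ T (by fun_prop) (by fun_prop)]
  refine norm_cfc_le (abs_nonneg _) fun t _ => ?_
  have := abs_max_sub_max_le_abs (t - a) (t - b) 0
  rw [show t - a - (t - b) = -(a - b) by ring, abs_neg] at this
  simpa using this

lemma norm_cutNeg_sub_cutNeg_le (a b : ℝ) (T : H →L[ℂ] H) :
    ‖cutNeg a T - cutNeg b T‖ ≤ |a - b| := by
  rw [cutNeg, cutNeg, ← cfc_sub _ _ T (by fun_prop) (by fun_prop)]
  refine norm_cfc_le (abs_nonneg _) fun t _ => ?_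
  have := abs_max_sub_max_le_abs (a - t) (b - t) 0
  rw [show a - t - (b - t) = (a - b) by ring] at this
  simpa using this

lemma norm_cut_sub_self_le {a : ℝ} (ha : 0 ≤ a) {T : H →L[ℂ] H} (hT : 0 ≤ T) :
    ‖cut a T - T‖ ≤ a := by
  have hsa : IsSelfAdjoint T := .of_nonneg hT
  conv_lhs => rw [← cfc_id' ℝ T]
  rw [cfc_id' ℝ T, cut]
  nth_rw 2 [← cfc_id' ℝ T]
  rw [← cfc_sub _ _ T (by fun_prop) (by fun_prop)]
  refine norm_cfc_le ha fun t ht => ?_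
  have : 0 ≤ t := spectrum_nonneg_of_nonneg hT ht
  rw [Real.norm_eq_abs, abs_le]
  grind

/-- A function divisible by `t - l` kills the `l`-eigenvectors. -/
lemma cfc_apply_eq_zero {T : H →L[ℂ] H} (hT : IsSelfAdjoint T) {l : ℝ} {x : H}
    (hx : T x = l • x) {f h : ℝ → ℝ} (hh : Continuous h) (hf : ∀ t, f t = h t * (t - l)) :
    cfc f T x = 0 := by
  have : cfc f T = cfc h T * (T - algebraMap ℝ _ l) := by
    conv_rhs => rw [← cfc_id' ℝ T, ← cfc_const l T, ← cfc_sub _ _ T (by fun_prop) (by fun_prop)]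
    rw [cfc_id' ℝ T, ← cfc_mul _ _ T hh.continuousOn (by fun_prop)]
    exact cfc_congr fun t _ => hf t
  rw [this, mul_apply_eq_comp]
  simp [Algebra.algebraMap_eq_smul_one, hx]

lemma cut_apply_eq_zero {T : H →L[ℂ] H} (hT : IsSelfAdjoint T) {l a : ℝ} (hla : l < a) {x : H}
    (hx : T x = l • x) : cut a T x = 0 := by
  have h0 : ∀ t : ℝ, 0 < max (t - l) (a - l) := fun t => lt_max_of_lt_right (by linarith)
  refine cfc_apply_eq_zero hT hx (h := fun t => max (t - a) 0 * (max (t - l) (a - l))⁻¹)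
    (Continuous.mul (by fun_prop) (Continuous.inv₀ (by fun_prop) fun t => (h0 t).ne')) fun t => ?_
  rcases le_total t a with h | h
  · simp [max_eq_right (sub_nonpos.2 h)]
  · have h1 : a - l ≤ t - l := by linarith
    have h2 : t - l ≠ 0 := by linarith
    rw [max_eq_left h1]
    field_simp

lemma cutNeg_apply_eq_zero {T : H →L[ℂ] H} (hT : IsSelfAdjoint T) {l a : ℝ} (hla : a < l) {x : H}
    (hx : T x = l • x) : cutNeg a T x = 0 := by
  have h0 : ∀ t : ℝ, min (t - l) (a - l) < 0 := fun t => min_lt_of_right_lt (by linarith)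
  refine cfc_apply_eq_zero hT hx (h := fun t => max (a - t) 0 * (min (t - l) (a - l))⁻¹)
    (Continuous.mul (by fun_prop) (Continuous.inv₀ (by fun_prop) fun t => (h0 t).ne)) fun t => ?_
  rcases le_total a t with h | h
  · simp [max_eq_right (sub_nonpos.2 h)]
  · have h1 : t - l ≤ a - l := by linarith
    have h2 : t - l ≠ 0 := by linarith
    rw [min_eq_left h1]
    field_simp

end CFC

/-! ### Compact operators and their outer invariant subspaces -/

section Spectral

variable {H : Type*} [NormedAddCommGroup H] [InnerProductSpace ℂ H] [CompleteSpace H]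

/-- A consequence of Gelfand's formula. -/
lemma exists_norm_pow_le (K : H →L[ℂ] H) {ρ : ℝ} (hρ : 0 < ρ)
    (h : spectralRadius ℂ K < ENNReal.ofReal ρ) : ∃ C > 0, ∀ n : ℕ, ‖K ^ n‖ ≤ C * ρ ^ n := by
  have h1 := (spectrum.pow_norm_pow_one_div_tendsto_nhds_spectralRadius K).eventually
    (gt_mem_nhds h)
  obtain ⟨N, hN⟩ := eventually_atTop.1 h1
  refine ⟨1 + ∑ k ∈ Finset.range (N + 1), ‖K ^ k‖ / ρ ^ k, by positivity, fun n => ?_⟩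
  have hs : 0 ≤ ∑ k ∈ Finset.range (N + 1), ‖K ^ k‖ / ρ ^ k := by positivity
  by_cases hn : n < N + 1
  · have := Finset.single_le_sum (f := fun k => ‖K ^ k‖ / ρ ^ k) (fun k _ => by positivity)
      (Finset.mem_range.2 hn)
    rw [← div_le_iff₀ (by positivity)]
    linarith
  · have h2 := hN n (by omega)
    rw [ENNReal.ofReal_lt_ofReal_iff hρ] at h2
    have hn0 : n ≠ 0 := by omega
    have h3 : ‖K ^ n‖ ≤ ρ ^ n := by
      calc ‖K ^ n‖ = (‖K ^ n‖ ^ (1 / n : ℝ)) ^ n := by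
            rw [one_div, Real.rpow_inv_natCast_pow (norm_nonneg _) hn0]
        _ ≤ ρ ^ n := by gcongr
    have : 0 < ρ ^ n := by positivity
    nlinarith

/-- By the Fredholm alternative the spectrum of a compact operator away from `0` consists of
eigenvalues, so these control the spectral radius. -/
lemma spectralRadius_le_of_eigenvalues {K : H →L[ℂ] H} (hK : IsCompactOperator K) {r : ℝ}
    (h : ∀ μ : ℂ, ∀ x, x ≠ 0 → K x = μ • x → ‖μ‖ ≤ r) :
    spectralRadius ℂ K ≤ ENNReal.ofReal r := by
  refine iSup₂_le fun μ hμ => ?_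
  by_cases h0 : μ = 0
  · simp [h0]
  obtain ⟨x, hx⟩ := ((hK.hasEigenvalue_iff_mem_spectrum h0).2 hμ).exists_hasEigenvector
  have := h μ x hx.2 (by simpa using hx.apply_eq_smul)
  rw [← enorm_eq_nnnorm, ← ofReal_norm]
  exact ENNReal.ofReal_le_ofReal this

lemma spectralRadius_lt_of_eigenvalues [Nontrivial H] {K : H →L[ℂ] H} (hK : IsCompactOperator K)
    {r : ℝ} (hr : 0 < r) (h : ∀ μ : ℂ, ∀ x, x ≠ 0 → K x = μ • x → ‖μ‖ < r) :
    spectralRadius ℂ K < ENNReal.ofReal r := by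
  refine spectrum.spectralRadius_lt_of_forall_lt K fun μ hμ => ?_
  rw [← NNReal.coe_lt_coe, coe_nnnorm, Real.coe_toNNReal _ hr.le]
  by_cases h0 : μ = 0
  · simpa [h0]
  obtain ⟨x, hx⟩ := ((hK.hasEigenvalue_iff_mem_spectrum h0).2 hμ).exists_hasEigenvector
  exact h μ x hx.2 (by simpa using hx.apply_eq_smul)

/-- A finite-dimensional `A`-invariant subspace on which all eigenvalues of `A` have modulus
greater than `r`. -/
structure IsOuter (A : H →L[ℂ] H) (r : ℝ) (W : Submodule ℂ H) : Prop where
  fin : FiniteDimensional ℂ W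
  inv : ∀ w ∈ W, A w ∈ W
  eig : ∀ μ : ℂ, ∀ w ∈ W, w ≠ 0 → A w = μ • w → r < ‖μ‖

omit [CompleteSpace H] in
lemma mem_sup_span_singleton_iff {W : Submodule ℂ H} {x w : H} :
    w ∈ W ⊔ Submodule.span ℂ {x} ↔ ∃ u ∈ W, ∃ c : ℂ, u + c • x = w := by
  simp [Submodule.mem_sup, Submodule.mem_span_singleton]

omit [CompleteSpace H] in
/-- An eigenvector of `A` modulo `W`, for an eigenvalue of modulus greater than `r`, enlarges an
outer subspace `W` to another one. -/
lemma IsOuter.sup_span {A : H →L[ℂ] H} {r : ℝ} {W : Submodule ℂ H} (hW : IsOuter A r W) {x : H}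
    {l : ℂ} (hx : x ∉ W) (hl : r < ‖l‖) (hAx : A x - l • x ∈ W) :
    IsOuter A r (W ⊔ Submodule.span ℂ {x}) where
  fin := by
    have := hW.fin
    infer_instance
  inv := by
    intro w hw
    obtain ⟨u, hu, c, rfl⟩ := mem_sup_span_singleton_iff.1 hw
    refine mem_sup_span_singleton_iff.2
      ⟨A u + c • (A x - l • x), W.add_mem (hW.inv u hu) (W.smul_mem _ hAx), c * l, ?_⟩
    simp only [map_add, map_smul]
    module
  eig := by
    intro μ w hw hw0 hAw
    obtain ⟨u, hu, c, rfl⟩ := mem_sup_span_singleton_iff.1 hw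
    by_cases hc : c = 0
    · subst hc
      simp only [zero_smul, add_zero] at hw0 hAw
      exact hW.eig μ u hu hw0 hAw
    · suffices h : l = μ by rwa [← h]
      by_contra hne
      have h1 : (c * (μ - l)) • x ∈ W := by
        have : (c * (μ - l)) • x = A u + c • (A x - l • x) - μ • u := by
          have h2 : A u + c • A x = μ • (u + c • x) := by rw [← hAw]; simp
          have h3 : A u = μ • (u + c • x) - c • A x := by rw [← h2]; abel
          rw [h3]
          module
        rw [this]
        exact W.sub_mem (W.add_mem (hW.inv u hu) (W.smul_mem _ hAx)) (W.smul_mem _ hu)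
      have h2 : c * (μ - l) ≠ 0 := mul_ne_zero hc (sub_ne_zero.2 (Ne.symm hne))
      exact hx ((W.smul_mem_iff h2).1 h1)

omit [CompleteSpace H] in
/-- Outer subspaces cannot be enlarged forever: an infinite chain would give orthonormal vectors
whose images under the compact operator `A` are uniformly separated. -/
lemma exists_isOuter {A : H →L[ℂ] H} (hA : IsCompactOperator A) {r : ℝ} (hr : 0 < r) :
    ∃ W : Submodule ℂ H, IsOuter A r W ∧
      ∀ l : ℂ, ∀ x, x ∉ W → A x - l • x ∈ W → ‖l‖ ≤ r := by
  by_contra! hcon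
  have step : ∀ W : {W : Submodule ℂ H // IsOuter A r W}, ∃ W' : {W : Submodule ℂ H // IsOuter A r W},
      ∃ e : H, W.1 ≤ W'.1 ∧ e ∈ W'.1 ∧ ‖e‖ = 1 ∧
        ∀ u ∈ W.1, r ≤ ‖A e - u‖ := by
    rintro ⟨W, hW⟩
    obtain ⟨l, x, hx, hAx, hl⟩ := hcon W hW
    have := hW.fin
    -- the component of `x` orthogonal to `W` is still an eigenvector modulo `W`
    set y := x - W.starProjection x with hy
    have hPx : W.starProjection x ∈ W := W.starProjection_apply_mem x
    have hyW : y ∉ W := fun h => hx (by simpa [hy] using W.add_mem h hPx)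
    have hy0 : y ≠ 0 := fun h => hyW (h ▸ W.zero_mem)
    have hyo : y ∈ Wᗮ := W.sub_starProjection_mem_orthogonal x
    have hAy : A y - l • y ∈ W := by
      have : A y - l • y = (A x - l • x) - (A (W.starProjection x) - l • W.starProjection x) := by
        rw [hy, map_sub]; module
      rw [this]
      exact W.sub_mem hAx (W.sub_mem (hW.inv _ hPx) (W.smul_mem _ hPx))
    have hny : ‖y‖ ≠ 0 := norm_ne_zero_iff.2 hy0
    set e : H := ((‖y‖⁻¹ : ℝ) : ℂ) • y with he
    have hne : ‖e‖ = 1 := by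
      rw [he, norm_smul, Complex.norm_real, norm_inv, norm_norm, inv_mul_cancel₀ hny]
    refine ⟨⟨_, hW.sup_span hyW hl hAy⟩, e, le_sup_left, ?_, hne, ?_⟩
    · exact Submodule.smul_mem _ _ (Submodule.mem_sup_right (Submodule.mem_span_singleton_self y))
    · intro u hu
      have heo : e ∈ Wᗮ := Submodule.smul_mem _ _ hyo
      have hAe : A e - l • e ∈ W := by
        have : A e - l • e = ((‖y‖⁻¹ : ℝ) : ℂ) • (A y - l • y) := by
          rw [he, map_smul]; module
        rw [this]
        exact W.smul_mem _ hAy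
      have hmem : (A e - l • e) - u ∈ W := W.sub_mem hAe hu
      have horth : inner ℂ ((A e - l • e) - u) (l • e) = 0 :=
        (Submodule.mem_orthogonal W _).1 (Submodule.smul_mem _ l heo) _ hmem
      have hpy := norm_add_sq_eq_norm_sq_add_norm_sq_of_inner_eq_zero _ _ horth
      rw [show (A e - l • e) - u + l • e = A e - u by abel, norm_smul, hne, mul_one] at hpy
      have : ‖l‖ ≤ ‖A e - u‖ := by
        refine le_of_sq_le_sq ?_ (norm_nonneg _)
        nlinarith [mul_self_nonneg ‖(A e - l • e) - u‖]
      exact hl.le.trans this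
  choose nxt e hle hmem hnorm hsep using step
  let W0 : {W : Submodule ℂ H // IsOuter A r W} :=
    ⟨⊥, ⟨inferInstance, by simp, fun μ w hw h0 => (h0 (by simpa using hw)).elim⟩⟩
  let S : ℕ → {W : Submodule ℂ H // IsOuter A r W} := fun n => nxt^[n] W0
  have hS : ∀ n, S (n + 1) = nxt (S n) := fun n => Function.iterate_succ_apply' _ _ _
  have hmono : Monotone fun n => (S n).1 := monotone_nat_of_le_succ fun n => by
    rw [hS]; exact hle _
  have hsep' : ∀ i j, i < j → r ≤ ‖A (e (S j)) - A (e (S i))‖ := fun i j hij => by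
    refine hsep (S j) _ ((S j).2.inv _ ?_)
    have := hmem (S i)
    rw [← hS] at this
    exact hmono (Nat.succ_le_of_lt hij) this
  obtain ⟨K, hK, hKA⟩ := hA.image_closedBall_subset_compact (f := (A : H →ₗ[ℂ] H)) 1
  have hin : ∀ n, A (e (S n)) ∈ K := fun n => hKA ⟨e (S n), by simp [hnorm], rfl⟩
  obtain ⟨z, -, φ, hφ, hlim⟩ := hK.tendsto_subseq hin
  obtain ⟨N, hN⟩ := Metric.cauchySeq_iff.1 hlim.cauchySeq r hr
  have h1 := hN (N + 1) (by omega) N le_rfl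
  have h2 := hsep' _ _ (hφ (Nat.lt_succ_self N))
  rw [dist_eq_norm] at h1
  exact absurd h1 (not_lt.2 h2)

end Spectral

/-! ### Riesz splitting and kernels of cuts of limit points -/

section Decomposition

variable {H : Type*} [NormedAddCommGroup H] [InnerProductSpace ℂ H] [CompleteSpace H]

omit [CompleteSpace H] in
/-- The inverse of `A` on an outer subspace `W`, precomposed with the orthogonal projection. -/
lemma IsOuter.exists_inverse {A : H →L[ℂ] H} {r : ℝ} (hr : 0 < r) {W : Submodule ℂ H}
    (hW : IsOuter A r W) [FiniteDimensional ℂ W] :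
    ∃ G : H →L[ℂ] H, IsCompactOperator G ∧ (∀ x, G x ∈ W) ∧ (∀ w ∈ W, G (A w) = w) ∧
      A * G = W.starProjection := by
  have hinj : Function.Injective ((A : H →ₗ[ℂ] H).restrict hW.inv) := by
    rw [← LinearMap.ker_eq_bot, LinearMap.ker_eq_bot']
    rintro ⟨w, hw⟩ h
    have hAw : A w = 0 := congrArg Subtype.val h
    by_contra h0
    have := hW.eig 0 w hw (fun h => h0 (Subtype.ext h)) (by rw [hAw, zero_smul])
    rw [norm_zero] at this
    exact absurd this (not_lt.2 hr.le)
  set e := LinearEquiv.ofInjectiveEndo _ hinj with he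
  have hee : ∀ w : W, ((e w : W) : H) = A w := fun w => rfl
  let G : H →L[ℂ] H := (W.subtypeL ∘L LinearMap.toContinuousLinearMap (e.symm : W →ₗ[ℂ] W)) ∘L
    W.orthogonalProjectionOnto
  have hG : ∀ x, G x = (e.symm (W.orthogonalProjectionOnto x) : W) := fun x => rfl
  refine ⟨G, ?_, fun x => ?_, fun w hw => ?_, ?_⟩
  · have : ProperSpace W := FiniteDimensional.proper ℂ W
    exact (isCompactOperator_of_locallyCompactSpace_rng
      (W.subtypeL ∘L LinearMap.toContinuousLinearMap (e.symm : W →ₗ[ℂ] W))).comp_clm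
        W.orthogonalProjectionOnto
  · rw [hG]; exact Subtype.mem _
  · rw [hG]
    have h1 : W.orthogonalProjectionOnto (A w) = e ⟨w, hw⟩ := by
      apply Subtype.ext
      rw [hee]
      exact W.starProjection_eq_self_iff.2 (hW.inv w hw)
    rw [h1, e.symm_apply_apply]
  · ext x
    rw [mul_apply_eq_comp, hG, ← hee, e.apply_symm_apply]
    rfl

/-- The Riesz splitting of a compact operator `A` at modulus `r`: a finite-dimensional subspace `W`
on which `A ^ n` expands at rate at least `σ ^ n` for some `σ > r`, and a complement of `W`, the
range of `1 + L` with `L` valued in `W`, on which `A ^ n` grows at most at rate `r`. The operator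
`L` solves the Sylvester equation making the range of `1 + L` invariant under `A`. -/
lemma exists_splitting [Nontrivial H] {A : H →L[ℂ] H} (hA : IsCompactOperator A) {r : ℝ}
    (hr : 0 < r) :
    ∃ (W : Submodule ℂ H) (L : H →L[ℂ] H) (σ : ℝ), FiniteDimensional ℂ W ∧ r < σ ∧
      IsCompactOperator L ∧ (∀ x, L x ∈ W) ∧
      (∀ ρ > r, ∃ C > 0, ∀ n x, ‖(A ^ n) (x + L x)‖ ≤ C * ρ ^ n * ‖x‖) ∧
      ∃ c > 0, ∀ n, ∀ w ∈ W, c * σ ^ n * ‖w‖ ≤ ‖(A ^ n) w‖ := by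
  obtain ⟨W, hW, hmax⟩ := exists_isOuter hA hr
  have := hW.fin
  obtain ⟨G, hGc, hGW, hGA, hAG⟩ := hW.exists_inverse hr
  set P := W.starProjection with hP
  have hPW : ∀ x, P x ∈ W := W.starProjection_apply_mem
  have hPw : ∀ w ∈ W, P w = w := fun w hw => W.starProjection_eq_self_iff.2 hw
  have hPc : IsCompactOperator P := by
    have h := hGc.clm_comp A
    have h2 : (⇑A ∘ ⇑G) = ⇑P := by rw [← hAG]; rfl
    rwa [h2] at h
  -- the spectral radius of `G` is less than `1 / r`
  have hGr : spectralRadius ℂ G < ENNReal.ofReal r⁻¹ := by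
    refine spectralRadius_lt_of_eigenvalues hGc (by positivity) fun μ x hx hGx => ?_
    by_cases h0 : μ = 0
    · simpa [h0]
    have hxW : x ∈ W := by
      have := hGW x
      rwa [hGx, W.smul_mem_iff h0] at this
    have h1 : μ • A x = x := by
      rw [← map_smul, ← hGx, ← mul_apply_eq_comp, hAG, hPw x hxW]
    have h2 := hW.eig μ⁻¹ x hxW hx (by rw [eq_inv_smul_iff₀ h0, h1])
    rw [norm_inv] at h2
    exact (lt_inv_comm₀ hr (norm_pos_iff.2 h0)).1 h2
  obtain ⟨τ, hτ1, hτ2⟩ := ENNReal.lt_iff_exists_nnreal_btwn.1 hGr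
  have hτ0 : 0 < (τ : ℝ) := by
    have : (0 : ENNReal) < τ := bot_le.trans_lt hτ1
    exact_mod_cast this
  have hτr : (τ : ℝ) < r⁻¹ := by
    rw [← ENNReal.ofReal_coe_nnreal, ENNReal.ofReal_lt_ofReal_iff (by positivity)] at hτ2
    exact hτ2
  obtain ⟨C₁, hC₁, hGn⟩ := exists_norm_pow_le G hτ0 (by rwa [ENNReal.ofReal_coe_nnreal])
  have hrσ : r < (τ : ℝ)⁻¹ := (lt_inv_comm₀ hτ0 hr).1 hτr
  -- the spectral radius of the compression `D` is at most `r`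
  set D := (1 - P) * A with hD
  have hDc : IsCompactOperator D := by
    have h := hA.clm_comp (1 - P)
    have h2 : (⇑(1 - P) ∘ ⇑A) = ⇑D := rfl
    rwa [h2] at h
  have hDr : spectralRadius ℂ D ≤ ENNReal.ofReal r := by
    refine spectralRadius_le_of_eigenvalues hDc fun μ x hx hDx => ?_
    by_cases h0 : μ = 0
    · simpa [h0] using hr.le
    have hDx' : D x = A x - P (A x) := rfl
    refine hmax μ x (fun hxW => ?_) ?_
    · have h1 : D x = 0 := by rw [hDx', hPw _ (hW.inv x hxW), sub_self]
      rw [hDx] at h1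
      exact (smul_ne_zero h0 hx) h1
    · rw [← hDx, hDx', sub_sub_cancel]
      exact hPW _
  have hDn : ∀ ρ > r, ∃ C > 0, ∀ n : ℕ, ‖D ^ n‖ ≤ C * ρ ^ n := fun ρ hρ =>
    exists_norm_pow_le D (hr.trans hρ)
      (hDr.trans_lt ((ENNReal.ofReal_lt_ofReal_iff (hr.trans hρ)).2 hρ))
  -- the series solving the Sylvester equation
  have hsum : Summable fun k : ℕ => G ^ (k + 1) * A * D ^ k := by
    obtain ⟨ρ, hρ, hρσ⟩ := exists_between hrσ
    obtain ⟨C₂, hC₂, hD2⟩ := hDn ρ hρ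
    have hρ0 : 0 < ρ := hr.trans hρ
    have hlt : τ * ρ < 1 := by
      rw [lt_inv_comm₀ hρ0 hτ0, ← one_div, lt_div_iff₀ hρ0] at hρσ
      exact hρσ
    refine Summable.of_norm_bounded (g := fun k : ℕ => (C₁ * τ * ‖A‖ * C₂) * (τ * ρ) ^ k)
      ((summable_geometric_of_lt_one (by positivity) hlt).mul_left _) fun k => ?_
    calc ‖G ^ (k + 1) * A * D ^ k‖ ≤ ‖G ^ (k + 1)‖ * ‖A‖ * ‖D ^ k‖ :=
          (norm_mul_le _ _).trans (by gcongr; exact norm_mul_le _ _)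
      _ ≤ (C₁ * τ ^ (k + 1)) * ‖A‖ * (C₂ * ρ ^ k) := by
          gcongr
          · exact hGn _
          · exact hD2 _
      _ = _ := by rw [mul_pow]; ring
  set S := ∑' k : ℕ, G ^ (k + 1) * A * D ^ k with hS
  have hPG : P * G = G := by
    ext x
    exact hPw _ (hGW x)
  have hPS : P * S = S := by
    rw [hS, ← hsum.tsum_mul_left]
    refine tsum_congr fun k => ?_
    rw [pow_succ', ← mul_assoc, ← mul_assoc, ← mul_assoc, hPG]
  have hAS : A * S = P * A + S * D := by
    rw [hS, ← hsum.tsum_mul_left, (hsum.mul_left A).tsum_eq_zero_add, ← hsum.tsum_mul_right]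
    congr 1
    · rw [zero_add, pow_one, pow_zero, mul_one, ← mul_assoc, hAG]
    · refine tsum_congr fun k => ?_
      have : A * G ^ (k + 1 + 1) = G ^ (k + 1) := by
        rw [pow_succ', pow_succ', ← mul_assoc, ← mul_assoc, hAG, hPG]
      rw [← mul_assoc, ← mul_assoc, this, pow_succ D, ← mul_assoc]
  have hsemi : SemiconjBy (1 - S) D A := by
    rw [SemiconjBy, mul_sub, hAS, sub_mul, hD]
    noncomm_ring
  refine ⟨W, -S, (τ : ℝ)⁻¹, this, hrσ, ?_, ?_, ?_, C₁⁻¹, by positivity, ?_⟩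
  · have h : IsCompactOperator (⇑P ∘ ⇑(-S)) := hPc.comp_clm (-S)
    have h2 : (⇑P ∘ ⇑(-S)) = ⇑(-S) := by
      have : P * (-S) = -S := by rw [mul_neg, hPS]
      conv_rhs => rw [← this]
      rfl
    rwa [h2] at h
  · intro x
    have : S x ∈ W := by rw [← hPS]; exact hPW _
    exact W.neg_mem this
  · intro ρ hρ
    obtain ⟨C₂, hC₂, hD2⟩ := hDn ρ hρ
    refine ⟨(‖1 - S‖ + 1) * C₂, by positivity, fun n x => ?_⟩
    have h1 : (A ^ n) (x + (-S) x) = (1 - S) ((D ^ n) x) := by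
      have : (A ^ n) * (1 - S) = (1 - S) * D ^ n := ((hsemi.pow_right n).eq).symm
      rw [← mul_apply_eq_comp (1 - S), ← this, mul_apply_eq_comp]
      simp [sub_eq_add_neg]
    have hρ0 : 0 < ρ := hr.trans hρ
    calc ‖(A ^ n) (x + (-S) x)‖ ≤ ‖1 - S‖ * (‖D ^ n‖ * ‖x‖) := by
          rw [h1]
          exact (ContinuousLinearMap.le_opNorm _ _).trans
            (by gcongr; exact ContinuousLinearMap.le_opNorm _ _)
      _ ≤ (‖1 - S‖ + 1) * (C₂ * ρ ^ n * ‖x‖) := by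
          gcongr
          · linarith
          · exact hD2 n
      _ = _ := by ring
  · intro n w hw
    have hGAn : ∀ n : ℕ, ∀ w ∈ W, (G ^ n) ((A ^ n) w) = w := by
      intro n
      induction n with
      | zero => simp
      | succ n ih =>
        intro w hw
        rw [pow_succ' G, pow_succ A, mul_apply_eq_comp, mul_apply_eq_comp, ih _ (hW.inv w hw),
          hGA w hw]
    have h1 : ‖w‖ ≤ C₁ * τ ^ n * ‖(A ^ n) w‖ := by
      calc ‖w‖ = ‖(G ^ n) ((A ^ n) w)‖ := by rw [hGAn n w hw]
        _ ≤ ‖G ^ n‖ * ‖(A ^ n) w‖ := ContinuousLinearMap.le_opNorm _ _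
        _ ≤ _ := by gcongr; exact hGn n
    calc C₁⁻¹ * (τ : ℝ)⁻¹ ^ n * ‖w‖ ≤ C₁⁻¹ * (τ : ℝ)⁻¹ ^ n * (C₁ * τ ^ n * ‖(A ^ n) w‖) := by
          gcongr
      _ = ‖(A ^ n) w‖ := by rw [inv_pow]; field_simp

/-- `B` is an operator-norm limit point of the sequence `|A ^ n| ^ (1 / n)`. -/
def IsLimPt (A B : H →L[ℂ] H) : Prop :=
  ∃ φ : ℕ → ℕ, StrictMono φ ∧ Tendsto (fun k : ℕ => absPow A (φ k)) atTop (𝓝 B)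

lemma IsLimPt.nonneg {A B : H →L[ℂ] H} (h : IsLimPt A B) : 0 ≤ B := by
  obtain ⟨φ, -, h⟩ := h
  exact ge_of_tendsto' h fun k => absPow_nonneg _ _

/-- `(B - a)₊` kills every vector along which `A ^ n` grows at a rate below `a`. -/
lemma cut_apply_eq_zero_of_growth {A B : H →L[ℂ] H} (hB : IsLimPt A B) {a ρ K : ℝ} (hρ : 0 < ρ)
    (hρa : ρ < a) {z : H} (hz : ∀ n, ‖(A ^ n) z‖ ≤ K * ρ ^ n) : cut a B z = 0 := by
  have ha0 : 0 < a := hρ.trans hρa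
  have hB0 := hB.nonneg
  obtain ⟨φ, hφ, hlim⟩ := hB
  have hφ' : Tendsto φ atTop atTop := hφ.tendsto_atTop
  have hcut := tendsto_cut a (fun k => IsSelfAdjoint.of_nonneg (absPow_nonneg A (φ k)))
    (.of_nonneg hB0) hlim
  have h1 : Tendsto (fun k => ‖cut a (absPow A (φ k)) z‖) atTop (𝓝 ‖cut a B z‖) :=
    ((ContinuousLinearMap.apply ℂ H z).continuous.norm.tendsto (cut a B)).comp hcut
  have hq : Tendsto (fun n : ℕ => (a⁻¹ * ρ) ^ n) atTop (𝓝 0) :=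
    tendsto_pow_atTop_nhds_zero_of_lt_one (by positivity)
      (by rw [inv_mul_eq_div]; exact (div_lt_one ha0).2 hρa)
  have h2 : Tendsto (fun k => ‖cut a (absPow A (φ k))‖ * ((a⁻¹ * ρ) ^ (φ k) * K)) atTop
      (𝓝 (‖cut a B‖ * (0 * K))) :=
    hcut.norm.mul ((hq.comp hφ').mul_const K)
  have h3 : ∀ n, n ≠ 0 →
      ‖cut a (absPow A n) z‖ ≤ ‖cut a (absPow A n)‖ * ((a⁻¹ * ρ) ^ n * K) := fun n hn => by
    have h4 := norm_cut_apply_le ha0 (.of_nonneg (absPow_nonneg A n)) n z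
    rw [norm_absPow_pow_apply A hn] at h4
    refine h4.trans (mul_le_mul_of_nonneg_left ?_ (norm_nonneg _))
    rw [mul_pow, mul_assoc]
    exact mul_le_mul_of_nonneg_left ((hz n).trans (mul_comm _ _).le) (by positivity)
  have h5 := le_of_tendsto_of_tendsto h1 h2
    ((hφ'.eventually_ne_atTop 0).mono fun k hk => h3 (φ k) hk)
  rw [zero_mul, mul_zero] at h5
  exact norm_le_zero_iff.1 h5

/-- If `A ^ n` expands `W` at a rate `σ` and `a < b < σ`, then `(B - a)₊ (T - b)₊` is injective
on `W` for some operator `T`, namely any term `|A ^ n| ^ (1 / n)` close to `B` with `n` large. -/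
lemma exists_cut_cut_injOn {A B : H →L[ℂ] H} (hB : IsLimPt A B) {a b σ c : ℝ} (hb0 : 0 < b)
    (hab : a < b) (hbσ : b < σ) (hc : 0 < c) {W : Submodule ℂ H}
    (hlow : ∀ n, ∀ w ∈ W, c * σ ^ n * ‖w‖ ≤ ‖(A ^ n) w‖) :
    ∃ T : H →L[ℂ] H, ∀ w ∈ W, cut a B (cut b T w) = 0 → w = 0 := by
  have hB0 := hB.nonneg
  obtain ⟨φ, hφ, hlim⟩ := hB
  have hφ' : Tendsto φ atTop atTop := hφ.tendsto_atTop
  have hcut := tendsto_cut a (fun k => IsSelfAdjoint.of_nonneg (absPow_nonneg A (φ k)))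
    (.of_nonneg hB0) hlim
  have hba : 0 < b - a := sub_pos.2 hab
  have hσ0 : 0 < σ := hb0.trans hbσ
  have e1 : ∀ᶠ k in atTop, ‖cut a (absPow A (φ k)) - cut a B‖ < b - a :=
    (tendsto_iff_norm_sub_tendsto_zero.1 hcut).eventually (gt_mem_nhds hba)
  have e2 : ∀ᶠ k in atTop, (b / σ) ^ (φ k) < c :=
    ((tendsto_pow_atTop_nhds_zero_of_lt_one (by positivity) ((div_lt_one hσ0).2 hbσ)).comp
      hφ').eventually (gt_mem_nhds hc)
  obtain ⟨k, hk0, hk1, hk2⟩ := ((hφ'.eventually_ne_atTop 0).and (e1.and e2)).exists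
  generalize hn : φ k = n at hk0 hk1 hk2
  have hT0 : 0 ≤ absPow A n := absPow_nonneg _ _
  refine ⟨absPow A n, fun w hw h => ?_⟩
  have h1 : cut b (absPow A n) w = 0 := by
    by_contra hne
    have h2 := le_norm_cut_cut (T := absPow A n) hab w
    have h3 : cut a (absPow A n) (cut b (absPow A n) w) =
        (cut a (absPow A n) - cut a B) (cut b (absPow A n) w) := by
      rw [sub_apply, h, sub_zero]
    rw [h3] at h2
    have h4 := (cut a (absPow A n) - cut a B).le_opNorm (cut b (absPow A n) w)
    have h5 : 0 < ‖cut b (absPow A n) w‖ := norm_pos_iff.2 hne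
    exact absurd (h2.trans h4) (not_le.2 (mul_lt_mul_of_pos_right hk1 h5))
  have h6 := norm_pow_apply_le_of_cut hb0.le hT0 n w h1
  rw [norm_absPow_pow_apply A hk0] at h6
  have h7 := hlow n w hw
  rw [div_pow, div_lt_iff₀ (by positivity)] at hk2
  by_contra hne
  have h5 : 0 < ‖w‖ := norm_pos_iff.2 hne
  exact absurd (h7.trans h6) (not_le.2 (mul_lt_mul_of_pos_right hk2 h5))

omit [CompleteSpace H] in
/-- If `Q = -Q L` with `L` valued in the finite-dimensional space `W`, then the range of `Q` is
`Q W`; so `Q` is injective on `W` as soon as `Q R` is, for some operator `R`. -/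
lemma injOn_of_comp_injOn {W : Submodule ℂ H} [FiniteDimensional ℂ W] {Q R L : H →L[ℂ] H}
    (hLW : ∀ x, L x ∈ W) (hQ : ∀ y, Q y = -(Q (L y))) (hi : ∀ w ∈ W, Q (R w) = 0 → w = 0) :
    ∀ w ∈ W, Q w = 0 → w = 0 := by
  let F : W →ₗ[ℂ] H := (Q : H →ₗ[ℂ] H) ∘ₗ W.subtype
  have hFr : ∀ y, Q y ∈ LinearMap.range F := fun y =>
    ⟨-⟨L y, hLW y⟩, by rw [hQ y, map_neg]; rfl⟩
  let E : W →ₗ[ℂ] LinearMap.range F :=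
    LinearMap.codRestrict _ ((Q : H →ₗ[ℂ] H) ∘ₗ (R : H →ₗ[ℂ] H) ∘ₗ W.subtype) fun w => hFr _
  have hE : Function.Injective E := by
    rw [← LinearMap.ker_eq_bot, LinearMap.ker_eq_bot']
    intro w hw
    exact Subtype.ext (hi w w.2 (congrArg Subtype.val hw))
  have hd1 := LinearMap.finrank_le_finrank_of_injective hE
  have hd2 := F.finrank_range_add_finrank_ker
  have hd3 : LinearMap.ker F = ⊥ := Submodule.finrank_eq_zero.1 (by omega)
  intro w hw h
  exact congrArg Subtype.val (LinearMap.ker_eq_bot'.1 hd3 ⟨w, hw⟩ h)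

/-- Just above every level `r > 0`, the kernel of `(B - a)₊` is determined by `A` alone, and
`(B - a)₊` is compact because it factors through the compact operator `L`. -/
lemma exists_cut [Nontrivial H] {A : H →L[ℂ] H} (hA : IsCompactOperator A) {r s : ℝ}
    (hr : 0 < r) (hrs : r < s) :
    ∃ a, r < a ∧ a < s ∧ ∃ L : H →L[ℂ] H, IsCompactOperator L ∧ ∀ B, IsLimPt A B →
      cut a B = -(cut a B * L) ∧ ∀ y, cut a B y = 0 ↔ L y = 0 := by
  obtain ⟨W, L, σ, hfin, hrσ, hLc, hLW, hup, c, hc, hlow⟩ := exists_splitting hA hr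
  obtain ⟨b, hrb, hb⟩ := exists_between (lt_min hrσ hrs)
  obtain ⟨a, hra, hab⟩ := exists_between hrb
  obtain ⟨ρ, hrρ, hρa⟩ := exists_between hra
  have hbσ : b < σ := hb.trans_le (min_le_left _ _)
  have hbs : b < s := hb.trans_le (min_le_right _ _)
  obtain ⟨C, hC, hCn⟩ := hup ρ hrρ
  refine ⟨a, hra, hab.trans hbs, L, hLc, fun B hB => ?_⟩
  have hrange : ∀ y, cut a B y = -(cut a B (L y)) := fun y => by
    have : cut a B (y + L y) = 0 :=
      cut_apply_eq_zero_of_growth hB (K := C * ‖y‖) (hr.trans hrρ) hρa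
        fun n => (hCn n y).trans (le_of_eq (by ring))
    rw [map_add] at this
    exact eq_neg_of_add_eq_zero_left this
  obtain ⟨T, hT⟩ := exists_cut_cut_injOn hB (hr.trans hrb) hab hbσ hc hlow
  have hinj := injOn_of_comp_injOn hLW hrange hT
  refine ⟨?_, fun y => ⟨fun h => ?_, fun h => ?_⟩⟩
  · ext y
    exact hrange y
  · refine hinj _ (hLW y) ?_
    rw [← neg_eq_zero, ← hrange y, h]
  · rw [hrange y, h, map_zero, neg_zero]

end Decomposition

/-! ### Comparison of two limit points -/

section Final

variable {H : Type*} [NormedAddCommGroup H] [InnerProductSpace ℂ H] [CompleteSpace H]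

/-- `B` is the norm limit, as `a` tends to `0`, of the compact operators `(B - a)₊`. -/
lemma IsLimPt.isCompactOperator [Nontrivial H] {A B : H →L[ℂ] H} (hA : IsCompactOperator A)
    (hB : IsLimPt A B) : IsCompactOperator B := by
  have h : ∀ n : ℕ, ∃ S : H →L[ℂ] H, IsCompactOperator S ∧ ‖S - B‖ ≤ 2 * (1 / ((n : ℝ) + 1)) := by
    intro n
    have hn : (0 : ℝ) < 1 / ((n : ℝ) + 1) := by positivity
    obtain ⟨a, ha, ha2, L, hL, hcut⟩ := exists_cut hA hn (s := 2 * (1 / ((n : ℝ) + 1)))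
      (by linarith)
    refine ⟨cut a B, ?_, (norm_cut_sub_self_le (by linarith) hB.nonneg).trans ha2.le⟩
    rw [(hcut B hB).1]
    exact (hL.clm_comp (cut a B)).neg
  choose S hS hSB using h
  refine isCompactOperator_of_tendsto (F := S) (l := atTop) ?_ (Eventually.of_forall hS)
  rw [tendsto_iff_norm_sub_tendsto_zero]
  refine squeeze_zero (fun _ => norm_nonneg _) hSB ?_
  simpa using tendsto_one_div_add_atTop_nhds_zero_nat.const_mul (2 : ℝ)

/-- If `B₁ x = l x`, comparing kernels of cuts at levels `a` slightly above `l` gives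
`(B₂ - l)₊ x = 0`, and at levels slightly below `l` gives `(B₂ - l)₋ x = 0`. -/
lemma eigenvector_transfer [Nontrivial H] {A B₁ B₂ : H →L[ℂ] H} (hA : IsCompactOperator A)
    (h₁ : IsLimPt A B₁) (h₂ : IsLimPt A B₂) {l : ℝ} (hl : 0 ≤ l) {x : H} (hx : B₁ x = l • x) :
    B₂ x = l • x := by
  have hs₁ : IsSelfAdjoint B₁ := .of_nonneg h₁.nonneg
  have hs₂ : IsSelfAdjoint B₂ := .of_nonneg h₂.nonneg
  have hpos : cut l B₂ x = 0 := by
    refine norm_le_zero_iff.1 (le_of_forall_pos_le_add fun ε hε => ?_)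
    have hδ : 0 < ε / (2 * (‖x‖ + 1)) := by positivity
    obtain ⟨a, ha, ha2, L, -, hcut⟩ := exists_cut hA (r := l + ε / (2 * (‖x‖ + 1)))
      (s := l + 2 * (ε / (2 * (‖x‖ + 1)))) (by positivity) (by linarith)
    have h1 : cut a B₂ x = 0 :=
      ((hcut B₂ h₂).2 x).2 (((hcut B₁ h₁).2 x).1 (cut_apply_eq_zero hs₁ (by linarith) hx))
    have h2 : cut l B₂ x = (cut l B₂ - cut a B₂) x := by rw [sub_apply, h1, sub_zero]
    rw [h2, zero_add]
    calc _ ≤ ‖cut l B₂ - cut a B₂‖ * ‖x‖ := ContinuousLinearMap.le_opNorm _ _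
      _ ≤ (2 * (ε / (2 * (‖x‖ + 1)))) * (‖x‖ + 1) := by
        gcongr
        · refine (norm_cut_sub_cut_le _ _ _).trans ?_
          rw [abs_le]; constructor <;> linarith
        · linarith
      _ = ε := by field_simp
  have hneg : cutNeg l B₂ x = 0 := by
    rcases hl.eq_or_lt with rfl | hl
    · have : cutNeg 0 B₂ = 0 := by
        rw [cutNeg, ← cfc_const_zero ℝ B₂]
        refine cfc_congr fun t ht => ?_
        have : 0 ≤ t := spectrum_nonneg_of_nonneg h₂.nonneg ht
        simpa using this
      rw [this, zero_apply]
    refine norm_le_zero_iff.1 (le_of_forall_pos_le_add fun ε hε => ?_)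
    have hδ : 0 < ε / (‖x‖ + 1) := by positivity
    obtain ⟨r, hr, hrl⟩ := exists_between
      (max_lt (sub_lt_self l hδ) hl : max (l - ε / (‖x‖ + 1)) 0 < l)
    have hr1 := (le_max_left _ _).trans_lt hr
    have hr0 := (le_max_right _ _).trans_lt hr
    obtain ⟨a, ha, hal, L, -, hcut⟩ := exists_cut hA hr0 hrl
    -- `x` is in the range of `(B₁ - a)₊`, hence orthogonal to its kernel
    have h1 : cut a B₁ x = (l - a) • x := by
      have := congrArg (fun S : H →L[ℂ] H => S x) (cut_sub_cutNeg a hs₁)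
      simp only [sub_apply, cutNeg_apply_eq_zero hs₁ hal hx, sub_zero] at this
      rw [this, hx, sub_smul, Algebra.algebraMap_eq_smul_one]
      rfl
    have h2 : cutNeg a B₂ x = 0 := by
      set y := cutNeg a B₂ (cutNeg a B₂ x) with hy
      have h3 : cut a B₂ y = 0 := by
        rw [hy, ← mul_apply_eq_comp, cut_mul_cutNeg, zero_apply]
      have h4 : cut a B₁ y = 0 := ((hcut B₁ h₁).2 y).2 (((hcut B₂ h₂).2 y).1 h3)
      have h5 : inner ℂ ((l - a) • x) y = 0 := by
        have h := (cut_isSelfAdjoint a B₁).isSymmetric x y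
        simp only [ContinuousLinearMap.coe_coe] at h
        rw [← h1, h, h4, inner_zero_right]
      have h6 : inner ℂ x y = 0 := by
        rw [← Complex.coe_smul, inner_smul_left] at h5
        refine (mul_eq_zero.1 h5).resolve_left ?_
        rw [Complex.conj_ofReal]
        exact_mod_cast (sub_pos.2 hal).ne'
      have h7 := (cutNeg_isSelfAdjoint a B₂).isSymmetric x (cutNeg a B₂ x)
      simp only [ContinuousLinearMap.coe_coe] at h7
      rw [← hy, h6] at h7
      exact inner_self_eq_zero.1 h7
    have h8 : cutNeg l B₂ x = (cutNeg l B₂ - cutNeg a B₂) x := by rw [sub_apply, h2, sub_zero]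
    rw [h8, zero_add]
    calc _ ≤ ‖cutNeg l B₂ - cutNeg a B₂‖ * ‖x‖ := ContinuousLinearMap.le_opNorm _ _
      _ ≤ (ε / (‖x‖ + 1)) * (‖x‖ + 1) := by
        gcongr
        · refine (norm_cutNeg_sub_cutNeg_le _ _ _).trans ?_
          rw [abs_le]; constructor <;> linarith
        · linarith
      _ = ε := by field_simp
  have := congrArg (fun S : H →L[ℂ] H => S x) (cut_sub_cutNeg l hs₂)
  simp only [sub_apply, hpos, hneg, sub_zero] at this
  rw [eq_comm, sub_eq_zero] at this
  rw [this, Algebra.algebraMap_eq_smul_one]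
  rfl

omit [CompleteSpace H] in
open scoped ComplexOrder in
/-- Eigenvalues of a positive operator are nonnegative reals. -/
lemma exists_eigenvalue_eq_ofReal {B : H →L[ℂ] H} (hB : 0 ≤ B) {μ : ℂ} {x : H} (hx0 : x ≠ 0)
    (hx : B x = μ • x) : ∃ l : ℝ, 0 ≤ l ∧ (l : ℂ) = μ := by
  have hμ : 0 ≤ μ := by
    have h := ((ContinuousLinearMap.nonneg_iff_isPositive B).1 hB).inner_nonneg_right x
    rw [hx, inner_smul_right, inner_self_eq_norm_sq_to_K] at h
    have h3 : (0 : ℝ) < ‖x‖ ^ 2 := by have := norm_pos_iff.2 hx0; positivity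
    have h4 : (0 : ℂ) < ((‖x‖ ^ 2 : ℝ) : ℂ) := by exact_mod_cast h3
    refine le_of_mul_le_mul_right ?_ h4
    simpa using h
  obtain ⟨h1, h2⟩ := Complex.le_def.1 hμ
  exact ⟨μ.re, h1, Complex.ext rfl h2⟩

end Final

/-- For a compact operator `A` with `‖A‖ < 1`, the sequence `(|A^n|^{1/n})` has at most one
operator-norm limit point. -/
theorem abspow_limit_point_unique {H : Type*} [NormedAddCommGroup H]
    [InnerProductSpace ℂ H] [CompleteSpace H] [TopologicalSpace.SeparableSpace H]
    (A : H →L[ℂ] H) (hA : IsCompactOperator (⇑A)) (hnorm : ‖A‖ < 1)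
    (B₁ B₂ : H →L[ℂ] H)
    (hB₁ : ∃ φ : ℕ → ℕ, StrictMono φ ∧ Tendsto (fun k : ℕ => absPow A (φ k)) atTop (𝓝 B₁))
    (hB₂ : ∃ ψ : ℕ → ℕ, StrictMono ψ ∧ Tendsto (fun k : ℕ => absPow A (ψ k)) atTop (𝓝 B₂)) :
    B₁ = B₂ := by
  rcases subsingleton_or_nontrivial H with hH | hH
  · exact Subsingleton.elim _ _
  have h₁ : IsLimPt A B₁ := hB₁
  have h₂ : IsLimPt A B₂ := hB₂
  have hsymm : (B₁ : H →ₗ[ℂ] H).IsSymmetric := (IsSelfAdjoint.of_nonneg h₁.nonneg).isSymmetric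
  have hdense := ContinuousLinearMap.orthogonalComplement_iSup_eigenspaces_eq_bot
    (h₁.isCompactOperator hA) hsymm
  -- `B₁ - B₂` vanishes on all eigenspaces of `B₁`, whose span is dense
  have hle : (⨆ μ, Module.End.eigenspace (B₁ : H →ₗ[ℂ] H) μ) ≤
      LinearMap.ker ((B₁ - B₂ : H →L[ℂ] H) : H →ₗ[ℂ] H) := by
    refine iSup_le fun μ x hx => ?_
    have hx' : B₁ x = μ • x := Module.End.mem_eigenspace_iff.1 hx
    by_cases hx0 : x = 0
    · rw [hx0]; exact Submodule.zero_mem _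
    obtain ⟨l, hl, rfl⟩ := exists_eigenvalue_eq_ofReal h₁.nonneg hx0 hx'
    rw [Complex.coe_smul] at hx'
    have := eigenvector_transfer hA h₁ h₂ hl hx'
    rw [LinearMap.mem_ker]
    change B₁ x - B₂ x = 0
    rw [hx', this, sub_self]
  have hker : LinearMap.ker ((B₁ - B₂ : H →L[ℂ] H) : H →ₗ[ℂ] H) = ⊤ := by
    have hcl : IsClosed (LinearMap.ker ((B₁ - B₂ : H →L[ℂ] H) : H →ₗ[ℂ] H) : Set H) :=
      (B₁ - B₂).isClosed_ker
    rw [← Submodule.topologicalClosure_eq_top_iff] at hdense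
    rw [eq_top_iff, ← hdense]
    exact Submodule.topologicalClosure_minimal _ hle hcl
  ext x
  have : x ∈ LinearMap.ker ((B₁ - B₂ : H →L[ℂ] H) : H →ₗ[ℂ] H) := hker ▸ Submodule.mem_top
  exact sub_eq_zero.1 this
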